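/- Let F be a bounded standard set-valued map, T > 0, and for δ ≥ 0 let Λ^δ : C([0,T], ℝ^m) ⇒ C([0,T], ℝ^m) be defined by: y ∈ Λ^δ(z) iff there is an integrable h with h(u) ∈ F^δ(z(u)) for all u ∈ [0,T] and y(τ) = z(0) + ∫_0^τ h(u) du for all τ ∈ [0,T] (with F^0 = F and Λ = Λ^0). Let (δ_n) be a positive sequence decreasing to 0 and set Λ_n := Λ^{δ_n}. Suppose there exists a compact set K ⊂ C([0,T], ℝ^m) with Λ_n(z) ⊂ K for every z ∈ K and every n, and that Fix(Λ) := {z ∈ K : z ∈ Λ(z)} is nonempty. Then for every δ > 0 there exist ε > 0 and n₀ ∈ ℕ such that for all n > n₀ and all z ∈ K: d_{[0,T]}(z, Λ_n(z)) ≤ ε implies d_{[0,T]}(z, Fix(Λ)) ≤ δ, where d_{[0,T]} is the distance induced by the uniform norm on [0,T]. -/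

import Mathlib

open MeasureTheory Filter Topology Metric Set Pointwise

noncomputable section

/-- `ℝ^m` with the Euclidean norm. -/
abbrev Euc (m : ℕ) := EuclideanSpace ℝ (Fin m)

/-- A standard set-valued map `F : ℝ^m ⇒ ℝ^m`: nonempty compact convex values,
closed graph, and linear growth. -/
def IsStandardSVM {m : ℕ} (F : Euc m → Set (Euc m)) : Prop :=
  (∀ x, (F x).Nonempty ∧ IsCompact (F x) ∧ Convex ℝ (F x)) ∧
  IsClosed {p : Euc m × Euc m | p.2 ∈ F p.1} ∧
  ∃ c > 0, ∀ x, ∀ z ∈ F x, ‖z‖ ≤ c * (1 + ‖x‖)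

/-- A solution of the differential inclusion `dx/dt ∈ F x`: an absolutely continuous
curve `z : ℝ → ℝ^m` (written as the integral of a locally integrable derivative `h`)
with `h t ∈ F (z t)` for almost every `t`. -/
def IsSolution {m : ℕ} (F : Euc m → Set (Euc m)) (z : ℝ → Euc m) : Prop :=
  Continuous z ∧ ∃ h : ℝ → Euc m,
    (∀ a b : ℝ, IntervalIntegrable h volume a b) ∧
    (∀ᵐ t ∂volume, h t ∈ F (z t)) ∧
    ∀ t : ℝ, z t = z 0 + ∫ u in (0:ℝ)..t, h u

/-- `Φ_t(x)`: the set of points reached at time `t` by solutions starting at `x`. -/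
def PhiT {m : ℕ} (F : Euc m → Set (Euc m)) (t : ℝ) (x : Euc m) : Set (Euc m) :=
  {y | ∃ z : ℝ → Euc m, IsSolution F z ∧ z 0 = x ∧ z t = y}

/-- `ω_Φ(x) = ⋂_{t ≥ 0} closure (Φ_{[t,∞)}(x))`. -/
def omegaLimitSV {m : ℕ} (F : Euc m → Set (Euc m)) (x : Euc m) : Set (Euc m) :=
  ⋂ t ∈ Ici (0:ℝ), closure {y | ∃ s ≥ t, y ∈ PhiT F s x}

/-- An attractor for the set-valued dynamical system induced by `F`: a nonempty,
compact, invariant set admitting a neighborhood `U` with `Φ_t(U) ⊆ N^ε(A)` for all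
`t` large enough. -/
def IsAttractorSV {m : ℕ} (F : Euc m → Set (Euc m)) (A : Set (Euc m)) : Prop :=
  A.Nonempty ∧ IsCompact A ∧
  (∀ x ∈ A, ∃ z : ℝ → Euc m, IsSolution F z ∧ z 0 = x ∧ Set.range z ⊆ A) ∧
  ∃ U : Set (Euc m), IsOpen U ∧ A ⊆ U ∧
    ∀ ε > 0, ∃ tε > 0, ∀ t ≥ tε, ∀ x ∈ U, PhiT F t x ⊆ Metric.thickening ε A

/-- The basin of attraction `B(A) = {x | ω_Φ(x) ⊆ A}`. -/
def basinSV {m : ℕ} (F : Euc m → Set (Euc m)) (A : Set (Euc m)) : Set (Euc m) :=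
  {x | omegaLimitSV F x ⊆ A}

/-- The limit set `L(X) = ⋂_{t ≥ 0} closure {X s : s ≥ t}` of a path. -/
def limitSet {m : ℕ} (X : ℝ → Euc m) : Set (Euc m) :=
  ⋂ t ∈ Ici (0:ℝ), closure {y | ∃ s ≥ t, X s = y}

/-- `inf_{z ∈ S_Φ} sup_{u ∈ [0,T]} ‖z u - Y u‖`. -/
def distToSol {m : ℕ} (F : Euc m → Set (Euc m)) (Y : ℝ → Euc m) (T : ℝ) : ℝ :=
  sInf {d | ∃ z : ℝ → Euc m, IsSolution F z ∧ d = ⨆ u : Icc (0:ℝ) T, ‖z u - Y u‖}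

/-- Asymptotic pseudotrajectory of the set-valued dynamical system induced by `F`. -/
def IsAPT {m : ℕ} (F : Euc m → Set (Euc m)) (X : ℝ → Euc m) : Prop :=
  ∀ T > 0, Tendsto (fun t => distToSol F (fun u => X (t + u)) T) atTop (𝓝 0)

/-- A point `p` is attainable by the process `X`: for every `t > 0` and every
neighborhood `U` of `p`, `P(∃ s ≥ t, X s ∈ U) > 0`. -/
def Attainable {m : ℕ} {Ω : Type*} [MeasurableSpace Ω] (μ : Measure Ω)
    (X : ℝ → Ω → Euc m) (p : Euc m) : Prop :=
  ∀ t > 0, ∀ U ∈ 𝓝 p, 0 < μ {ω | ∃ s ≥ t, X s ω ∈ U}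

/-- `τ_n = γ_1 + ⋯ + γ_n`. -/
def tauOf (γ : ℕ → ℝ) (n : ℕ) : ℝ := ∑ i ∈ Finset.range n, γ (i + 1)

/-- `m(t) = sup {j | τ_j ≤ t}`. -/
def mIdx (γ : ℕ → ℝ) (t : ℝ) : ℕ := sSup {j | tauOf γ j ≤ t}

/-- Hypothesis H1: there is `w t α T` decreasing to `0` in `t` dominating the
conditional probability that `sup_{s ≥ t} inf_{z ∈ S_Φ} sup_{u ∈ [0,T]} ‖z u − X (s+u)‖ ≥ α`. -/
def HypH1 {m : ℕ} {Ω : Type*} [MeasurableSpace Ω] (μ : Measure Ω)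
    (𝓕 : ℝ → MeasurableSpace Ω) (F : Euc m → Set (Euc m)) (X : ℝ → Ω → Euc m) : Prop :=
  ∃ w : ℝ → ℝ → ℝ → ℝ,
    (∀ α > 0, ∀ T > 0, Antitone (fun t => w t α T) ∧ Tendsto (fun t => w t α T) atTop (𝓝 0)) ∧
    ∀ α > 0, ∀ T > 0, ∀ t : ℝ, ∀ᵐ ω ∂μ,
      (μ[Set.indicator {ω' | α ≤ ⨆ s : Ici t, distToSol F (fun u => X ((s : ℝ) + u) ω') T}
          (fun _ => (1:ℝ)) | 𝓕 t]) ω ≤ w t α T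

/-- `F^δ(x) = {y | ∃ z ∈ B(x,δ), dist(y, F z) < δ}`, with the convention `F^0 = F`. -/
def Fdelta {m : ℕ} (F : Euc m → Set (Euc m)) (δ : ℝ) (x : Euc m) : Set (Euc m) :=
  if δ = 0 then F x
  else {y | ∃ z : Euc m, dist z x < δ ∧ Metric.infDist y (F z) < δ}

/-- A `(δ(·), V(·))`-perturbed solution of `dx/dt ∈ F x`. -/
def IsPerturbedSolution {m : ℕ} (F : Euc m → Set (Euc m)) (δ : ℝ → ℝ) (V : ℝ → Euc m)
    (y : ℝ → Euc m) : Prop :=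
  Continuous y ∧ (∀ t > 0, 0 < δ t) ∧ Antitone δ ∧ Tendsto δ atTop (𝓝 0) ∧
  (∀ a b : ℝ, IntervalIntegrable V volume a b) ∧
  (∀ T > 0, Tendsto (fun t => ⨆ u : Icc (0:ℝ) T, ‖∫ r in t..(t + (u : ℝ)), V r‖)
    atTop (𝓝 0)) ∧
  ∃ h : ℝ → Euc m, (∀ a b : ℝ, IntervalIntegrable h volume a b) ∧
    (∀ᵐ t ∂(volume.restrict (Ioi (0:ℝ))), h t - V t ∈ Fdelta F (δ t) (y t)) ∧
    ∀ t ∈ Ici (0:ℝ), y t = y 0 + ∫ u in (0:ℝ)..t, h u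

/-- `Δ(n,T) = sup_{n < k ≤ m(τ_n + T)} ‖∑_{i=n}^{k-1} γ_{i+1} U_{i+1}‖`. -/
def DeltaNT {m : ℕ} {Ω : Type*} (γ : ℕ → ℝ) (U : ℕ → Ω → Euc m) (T : ℝ) (n : ℕ)
    (ω : Ω) : ℝ :=
  ⨆ k : {k : ℕ // n < k ∧ k ≤ mIdx γ (tauOf γ n + T)},
    ‖∑ i ∈ Finset.Ico n (k : ℕ), γ (i + 1) • U (i + 1) ω‖

/-- Condition (bruit2): the conditional probability that `sup_{m ≥ n} Δ(m,T) ≥ ε` is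
dominated by some `w n ε T` decreasing to `0` in `n`. -/
def Bruit2 {m : ℕ} {Ω : Type*} [MeasurableSpace Ω] (μ : Measure Ω)
    (𝓕 : ℕ → MeasurableSpace Ω) (γ : ℕ → ℝ) (U : ℕ → Ω → Euc m) : Prop :=
  ∃ w : ℕ → ℝ → ℝ → ℝ,
    (∀ ε > 0, ∀ T > 0, Antitone (fun n => w n ε T) ∧ Tendsto (fun n => w n ε T) atTop (𝓝 0)) ∧
    ∀ ε > 0, ∀ T > 0, ∀ n : ℕ, ∀ᵐ ω ∂μ,
      (μ[Set.indicator {ω' | ε ≤ ⨆ k : Ici n, DeltaNT γ U T (k : ℕ) ω'}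
          (fun _ => (1:ℝ)) | 𝓕 n]) ω ≤ w n ε T

/-- Topological `limsup` of a sequence of sets: points whose every neighborhood
meets infinitely many of the sets. -/
def setLimsup {X : Type*} [TopologicalSpace X] (A : ℕ → Set X) : Set X :=
  {y | ∀ U ∈ 𝓝 y, {n | (U ∩ A n).Nonempty}.Infinite}

/-- The operator `Λ^δ` on continuous paths `[0,T] → ℝ^m` (with `Λ^0 = Λ`). -/
def LambdaD {m : ℕ} (F : Euc m → Set (Euc m)) (T : ℝ) (hT : 0 ≤ T) (δ : ℝ)
    (z : C(Icc (0:ℝ) T, Euc m)) : Set C(Icc (0:ℝ) T, Euc m) :=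
  {y | ∃ h : ℝ → Euc m, IntervalIntegrable h volume 0 T ∧
    (∀ u : Icc (0:ℝ) T, h u ∈ Fdelta F δ (z u)) ∧
    ∀ τ : Icc (0:ℝ) T, y τ = z ⟨0, Set.left_mem_Icc.mpr hT⟩ + ∫ u in (0:ℝ)..(τ : ℝ), h u}

/-- `Φ^T(M) = closure (⋃_{s ∈ [0,T]} Φ_s(M))`. -/
def PhiTM {m : ℕ} (F : Euc m → Set (Euc m)) (T : ℝ) (M : Set (Euc m)) : Set (Euc m) :=
  closure (⋃ s ∈ Icc (0:ℝ) T, ⋃ x ∈ M, PhiT F s x)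

/-- `‖F‖ = sup_{x ∈ Φ^T(M)} sup_{y ∈ F x} ‖y‖`. -/
def normF {m : ℕ} (F : Euc m → Set (Euc m)) (T : ℝ) (M : Set (Euc m)) : ℝ :=
  sSup {r | ∃ x ∈ PhiTM F T M, ∃ y ∈ F x, r = ‖y‖}

/-- `K_C`: Lipschitz paths with constant `‖F‖ + C + 1` starting in `M`. -/
def KC {m : ℕ} (F : Euc m → Set (Euc m)) (T : ℝ) (hT : 0 ≤ T) (M : Set (Euc m))
    (C : ℝ) : Set C(Icc (0:ℝ) T, Euc m) :=
  {y | (∀ u v : Icc (0:ℝ) T, ‖y u - y v‖ ≤ (normF F T M + C + 1) * |(u : ℝ) - (v : ℝ)|) ∧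
    y ⟨0, Set.left_mem_Icc.mpr hT⟩ ∈ M}

/-- `S_{[0,T]}`: restrictions to `[0,T]` of solutions starting in `M`. -/
def SolRestrict {m : ℕ} (F : Euc m → Set (Euc m)) (T : ℝ) (M : Set (Euc m)) :
    Set C(Icc (0:ℝ) T, Euc m) :=
  {y | ∃ z : ℝ → Euc m, IsSolution F z ∧ z 0 ∈ M ∧ ∀ u : Icc (0:ℝ) T, y u = z u}

/-- A generalised stochastic approximation process relative to `F`. -/
def IsGSAP {m : ℕ} {Ω : Type*} [MeasurableSpace Ω] (μ : Measure Ω)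
    (F : Euc m → Set (Euc m)) (M : Set (Euc m)) (γ : ℕ → ℝ)
    (Fn : ℕ → Euc m → Set (Euc m)) (U : ℕ → Ω → Euc m) (x : ℕ → Ω → Euc m) : Prop :=
  (∀ n, 0 < γ n) ∧
  Tendsto (fun n => ∑ i ∈ Finset.range n, γ (i + 1)) atTop atTop ∧
  Tendsto γ atTop (𝓝 0) ∧
  (∃ C, ∀ n ω, ‖U n ω‖ ≤ C) ∧
  (∀ n ω, x (n + 1) ω - x n ω - γ (n + 1) • U (n + 1) ω ∈ γ (n + 1) • Fn n (x n ω)) ∧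
  (∀ T > 0, ∀ᵐ ω ∂μ, Tendsto
    (fun n => ⨆ k : {k : ℕ // ∑ i ∈ Finset.Ico n k, γ i ≤ T},
      ‖∑ i ∈ Finset.Ico n (k : ℕ), γ (i + 1) • U (i + 1) ω‖) atTop (𝓝 0)) ∧
  (∀ n ω, x n ω ∈ M) ∧
  (∀ δ > 0, ∃ n₀ : ℕ, ∀ n ≥ n₀, ∀ ω, Fn n (x n ω) ⊆ Fdelta F δ (x n ω))

lemma aux_ftc {m : ℕ} {C : NNReal} {Y : ℝ → Euc m} (hY : LipschitzWith C Y) (a b : ℝ) :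
    IntervalIntegrable (deriv Y) volume a b ∧ ∫ u in a..b, deriv Y u = Y b - Y a := by
  have hint : IntervalIntegrable (deriv Y) volume a b := by
    rw [intervalIntegrable_iff]
    refine Measure.integrableOn_of_bounded (M := C) (by simp [uIoc]) 
      (measurable_deriv Y).aestronglyMeasurable ?_
    exact Eventually.of_forall fun x => norm_deriv_le_of_lipschitz hY
  refine ⟨hint, ?_⟩
  ext i
  have h1 := (EuclideanSpace.proj (𝕜 := ℝ) i).intervalIntegral_comp_comm hint
  have hYi : LipschitzWith (‖(EuclideanSpace.proj (𝕜 := ℝ) i : Euc m →L[ℝ] ℝ)‖₊ * C)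
      (fun u => Y u i) :=
    (EuclideanSpace.proj (𝕜 := ℝ) i : Euc m →L[ℝ] ℝ).lipschitz.comp hY
  have h2 := (hYi.lipschitzOnWith (s := uIcc a b)).absolutelyContinuousOnInterval.integral_deriv_eq_sub
  have h3 : ∫ u in a..b, deriv (fun u => Y u i) u = ∫ u in a..b, (deriv Y u) i := by
    apply intervalIntegral.integral_congr_ae
    filter_upwards [hY.ae_differentiableAt_real] with u hu _
    exact ((EuclideanSpace.proj (𝕜 := ℝ) i : Euc m →L[ℝ] ℝ).hasFDerivAt.comp_hasDerivAt u 
      hu.hasDerivAt).deriv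
  rw [h3] at h2
  refine (h1.symm.trans h2).trans ?_
  simp

lemma aux_usc {m : ℕ} {F : Euc m → Set (Euc m)} (hF : IsStandardSVM F) {B : ℝ}
    (hB : ∀ x, ∀ y ∈ F x, ‖y‖ ≤ B) (x₀ : Euc m) {η : ℝ} (hη : 0 < η) :
    ∃ r > 0, ∀ x, dist x x₀ < r → ∀ y ∈ F x, ∃ v ∈ F x₀, dist y v < η := by
  by_contra hcon
  push Not at hcon
  choose x hx y hy hyv using fun n : ℕ => hcon (1 / ((n:ℝ) + 1)) (by positivity)
  have hxt : Tendsto x atTop (𝓝 x₀) := by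
    rw [tendsto_iff_dist_tendsto_zero]
    exact squeeze_zero (fun _ => dist_nonneg) (fun n => (hx n).le)
      tendsto_one_div_add_atTop_nhds_zero_nat
  obtain ⟨v, -, φ, hφ, hv⟩ := (isCompact_closedBall (0 : Euc m) B).tendsto_subseq
    (x := y) (fun n => by simpa using hB _ _ (hy n))
  have hmem : v ∈ F x₀ := by
    have : (x₀, v) ∈ {p : Euc m × Euc m | p.2 ∈ F p.1} :=
      hF.2.1.mem_of_tendsto ((hxt.comp hφ.tendsto_atTop).prodMk_nhds hv)
        (Eventually.of_forall fun n => hy (φ n))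
    exact this
  have h0 : Tendsto (fun n => dist ((y ∘ φ) n) v) atTop (𝓝 0) :=
    tendsto_iff_dist_tendsto_zero.1 hv
  have := ge_of_tendsto h0 (Eventually.of_forall fun n => hyv (φ n) v hmem)
  linarith

lemma aux_Fdelta {m : ℕ} {F : Euc m → Set (Euc m)} (hF : IsStandardSVM F) {δ : ℝ} (hδ : 0 < δ)
    {x y : Euc m} (h : y ∈ Fdelta F δ x) :
    ∃ z, dist z x < δ ∧ ∃ w ∈ F z, dist y w < δ := by
  rw [Fdelta, if_neg hδ.ne'] at h
  obtain ⟨z, hz, hd⟩ := h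
  exact ⟨z, hz, (infDist_lt_iff (hF.1 z).1).1 hd⟩

lemma aux_avg {m : ℕ} {T : ℝ} (hT : 0 ≤ T) {y : C(Icc (0:ℝ) T, Euc m)} {c : Euc m}
    {h : ℝ → Euc m} (hi : IntervalIntegrable h volume 0 T)
    (hy : ∀ τ : Icc (0:ℝ) T, y τ = c + ∫ u in (0:ℝ)..(τ : ℝ), h u)
    {S : Set (Euc m)} (hS : Convex ℝ S) (hSc : IsClosed S) (s t : Icc (0:ℝ) T)
    (hst : (s:ℝ) < t) (hmem : ∀ u : Icc (0:ℝ) T, (s:ℝ) ≤ u → (u:ℝ) ≤ t → h u ∈ S) :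
    ((t:ℝ) - s)⁻¹ • (y t - y s) ∈ S := by
  have hsub : ∀ a : Icc (0:ℝ) T, IntervalIntegrable h volume 0 a := fun a =>
    hi.mono_set (by rw [uIcc_of_le a.2.1, uIcc_of_le hT]; exact Icc_subset_Icc_right a.2.2)
  have e : y t - y s = ∫ u in (s:ℝ)..t, h u := by
    rw [hy, hy, add_sub_add_left_eq_sub,
      intervalIntegral.integral_interval_sub_left (hsub t) (hsub s)]
  rw [e, ← interval_average_eq, uIoc_of_le hst.le]
  refine hS.set_average_mem hSc (by simpa using hst) (by simp) ?_ ?_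
  · refine (ae_restrict_iff' measurableSet_Ioc).2 (Eventually.of_forall fun u hu => ?_)
    exact hmem ⟨u, s.2.1.trans hu.1.le, hu.2.trans t.2.2⟩ hu.1.le hu.2
  · exact (intervalIntegrable_iff_integrableOn_Ioc_of_le hst.le).1 ((hsub s).symm.trans (hsub t))

lemma aux_closure {m : ℕ} {F : Euc m → Set (Euc m)} (hF : IsStandardSVM F) {B : ℝ}
    (hB : ∀ x, ∀ y ∈ F x, ‖y‖ ≤ B) {T : ℝ} (hT : 0 < T) {e : ℕ → ℝ} (he : ∀ n, 0 < e n)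
    (he0 : Tendsto e atTop (𝓝 0)) {zs ys : ℕ → C(Icc (0:ℝ) T, Euc m)}
    {z y : C(Icc (0:ℝ) T, Euc m)} (hz : Tendsto zs atTop (𝓝 z)) (hy : Tendsto ys atTop (𝓝 y))
    (hmem : ∀ n, ys n ∈ LambdaD F T hT.le (e n) (zs n)) : y ∈ LambdaD F T hT.le 0 z := by
  choose h hi hF' heq using hmem
  have hev : ∀ t, Tendsto (fun n => ys n t) atTop (𝓝 (y t)) := fun t =>
    ((continuous_eval_const t).tendsto y).comp hy
  have hezv : ∀ t, Tendsto (fun n => zs n t) atTop (𝓝 (z t)) := fun t =>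
    ((continuous_eval_const t).tendsto z).comp hz
  have key : ∀ (S : Set (Euc m)), Convex ℝ S → IsClosed S → ∀ s t : Icc (0:ℝ) T, (s:ℝ) < t →
      (∀ᶠ n in atTop, ∀ u : Icc (0:ℝ) T, (s:ℝ) ≤ u → (u:ℝ) ≤ t → h n u ∈ S) →
      ((t:ℝ) - s)⁻¹ • (y t - y s) ∈ S := by
    intro S hS hSc s t hst hm
    refine hSc.mem_of_tendsto (((hev t).sub (hev s)).const_smul ((t:ℝ) - s)⁻¹) ?_
    filter_upwards [hm] with n hn
    exact aux_avg hT.le (hi n) (heq n) hS hSc s t hst hn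
  have hB0 : 0 ≤ B := by
    obtain ⟨w, hw⟩ := (hF.1 0).1
    exact (norm_nonneg _).trans (hB _ _ hw)
  have hlip1 : ∀ s t : Icc (0:ℝ) T, (s:ℝ) < t → ‖y t - y s‖ ≤ (B + 1) * ((t:ℝ) - s) := by
    intro s t hst
    have h1 := key (closedBall 0 (B+1)) (convex_closedBall _ _) isClosed_closedBall s t hst (by
      filter_upwards [he0.eventually (gt_mem_nhds one_pos)] with n hn u _ _
      obtain ⟨x, -, w, hw, hd⟩ := aux_Fdelta hF (he n) (hF' n u)
      have := hB _ _ hw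
      rw [mem_closedBall, dist_zero_right]
      have h2 : ‖h n u‖ ≤ ‖h n u - w‖ + ‖w‖ := by simpa using norm_add_le (h n u - w) w
      rw [dist_eq_norm] at hd
      linarith)
    have hp : 0 < (t:ℝ) - s := sub_pos.2 hst
    rw [mem_closedBall, dist_zero_right, norm_smul, norm_inv, Real.norm_of_nonneg hp.le,
      inv_mul_le_iff₀ hp] at h1
    linarith
  have hlip : LipschitzWith (Real.toNNReal (B+1)) y := by
    refine LipschitzWith.of_dist_le_mul fun s t => ?_
    rw [Subtype.dist_eq, Real.coe_toNNReal _ (by linarith), Real.dist_eq]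
    rcases lt_trichotomy (s:ℝ) t with hst | hst | hst
    · rw [dist_comm, dist_eq_norm, abs_sub_comm, abs_of_pos (sub_pos.2 hst)]
      exact hlip1 s t hst
    · have : s = t := Subtype.ext hst
      subst this; simp
    · rw [dist_eq_norm, abs_of_pos (sub_pos.2 hst)]
      exact hlip1 t s hst
  set Y : ℝ → Euc m := fun t => y (projIcc 0 T hT.le t) with hYdef
  have hY : LipschitzWith ((Real.toNNReal (B+1)) * 1) Y := 
    hlip.comp (LipschitzWith.projIcc hT.le)
  have hYv : ∀ t : Icc (0:ℝ) T, Y t = y t := fun t => by simp [Y]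
  have hder : ∀ t : Icc (0:ℝ) T, (t:ℝ) < T → DifferentiableAt ℝ Y t → 
      deriv Y t ∈ F (z t) := by
    intro t htT hd
    have hcl : IsClosed (F (z t)) := (hF.1 (z t)).2.1.isClosed
    rw [← hcl.closure_eq, closure_eq_iInter_cthickening]
    refine mem_iInter₂.2 fun η hη => ?_
    obtain ⟨r, hr, hus⟩ := aux_usc hF hB (z t) (half_pos hη)
    -- continuity of z at t
    obtain ⟨ρ, hρ, hzc⟩ := Metric.continuous_iff.1 z.continuous t (r/3) (by positivity)
    have hsl : Tendsto (slope Y t) (𝓝[>] (t:ℝ)) (𝓝 (deriv Y t)) :=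
      (hasDerivAt_iff_tendsto_slope.1 hd.hasDerivAt).mono_left
        (nhdsWithin_mono _ fun x hx => ne_of_gt hx)
    refine isClosed_cthickening.mem_of_tendsto hsl ?_
    have hI : Ioo (t:ℝ) (min T (t + ρ)) ∈ 𝓝[>] (t:ℝ) :=
      Ioo_mem_nhdsGT (lt_min htT (by linarith))
    filter_upwards [hI] with s hs
    have hsT : s < T := hs.2.trans_le (min_le_left _ _)
    have hsρ : s < t + ρ := hs.2.trans_le (min_le_right _ _)
    set s' : Icc (0:ℝ) T := ⟨s, t.2.1.trans hs.1.le, hsT.le⟩ with hs'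
    have hk := key (cthickening η (F (z t))) ((hF.1 (z t)).2.2.cthickening η) isClosed_cthickening
      t s' hs.1 (by
        filter_upwards [he0.eventually (gt_mem_nhds (half_pos hη)),
          he0.eventually (gt_mem_nhds (show 0 < r/3 by positivity)),
          Metric.tendsto_nhds.1 hz (r/3) (by positivity)] with n hn1 hn2 hn3 u hu1 hu2
        obtain ⟨x, hx, w, hw, hdw⟩ := aux_Fdelta hF (he n) (hF' n u)
        have d1 : dist (zs n u) (z u) < r/3 := (ContinuousMap.dist_apply_le_dist u).trans_lt hn3
        have d2 : dist (z u) (z t) < r/3 := hzc u (by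
          rw [Subtype.dist_eq, Real.dist_eq, abs_of_nonneg (sub_nonneg.2 hu1)]
          have : (u:ℝ) ≤ s := hu2
          linarith)
        have d3 : dist x (z t) < r := by
          have := dist_triangle4 x (zs n u) (z u) (z t)
          linarith
        obtain ⟨v, hv, hwv⟩ := hus x d3 w hw
        refine mem_cthickening_of_dist_le _ v _ _ hv ?_
        have := dist_triangle (h n u) w v
        linarith)
    have : slope Y t s = (s - t)⁻¹ • (y s' - y t) := by
      rw [slope_def_module, hYv t, ← hYv s']
    rw [this]; exact hk
  have hae : ∀ᵐ t : ℝ, ∀ ht : t ∈ Icc (0:ℝ) T, deriv Y t ∈ F (z ⟨t, ht⟩) := by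
    have hne : ∀ᵐ t : ℝ, t ≠ T := by simp [ae_iff, measure_singleton]
    filter_upwards [hY.ae_differentiableAt_real, hne] with t hd hn ht
    exact hder ⟨t, ht⟩ (lt_of_le_of_ne ht.2 hn) hd
  choose f hf using fun x => (hF.1 x).1
  classical
  set H : ℝ → Euc m := fun t =>
    if deriv Y t ∈ F (z (projIcc 0 T hT.le t)) then deriv Y t else f (z (projIcc 0 T hT.le t))
    with hH
  have hHae : ∀ᵐ t : ℝ, t ∈ Icc (0:ℝ) T → deriv Y t = H t := by
    filter_upwards [hae] with t ht htI
    have := ht htI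
    simp only [H, projIcc_of_mem hT.le htI, if_pos this]
  have hy0 : y ⟨0, left_mem_Icc.mpr hT.le⟩ = z ⟨0, left_mem_Icc.mpr hT.le⟩ := by
    refine tendsto_nhds_unique (hev _) ((hezv _).congr fun n => ?_)
    rw [heq]; simp
  refine ⟨H, ?_, ?_, ?_⟩
  · refine (aux_ftc hY 0 T).1.congr_ae ?_
    refine (ae_restrict_iff' measurableSet_uIoc).2 ?_
    filter_upwards [hHae] with t ht htI
    rw [uIoc_of_le hT.le] at htI
    exact ht (Ioc_subset_Icc_self htI)
  · intro u
    rw [Fdelta, if_pos rfl]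
    simp only [H, projIcc_val]
    split_ifs with hc
    · exact hc
    · exact hf _
  · intro τ
    have h1 := (aux_ftc hY 0 τ).2
    rw [intervalIntegral.integral_congr_ae (g := H)] at h1
    · rw [h1, hYv τ, ← hy0]
      have : Y 0 = y ⟨0, left_mem_Icc.mpr hT.le⟩ := hYv ⟨0, left_mem_Icc.mpr hT.le⟩
      rw [this]; abel
    · filter_upwards [hHae] with t ht htI
      rw [uIoc_of_le τ.2.1] at htI
      exact ht ⟨htI.1.le, htI.2.trans τ.2.2⟩

lemma aux_nonempty {m : ℕ} {F : Euc m → Set (Euc m)} (hF : IsStandardSVM F) {B : ℝ}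
    (hB : ∀ x, ∀ y ∈ F x, ‖y‖ ≤ B) {T : ℝ} (hT : 0 < T) {δ : ℝ} (hδ : 0 < δ)
    (z : C(Icc (0:ℝ) T, Euc m)) : (LambdaD F T hT.le δ z).Nonempty := by
  choose f hf using fun x => (hF.1 x).1
  obtain ⟨η, hη, huc⟩ := Metric.uniformContinuous_iff.1
    (CompactSpace.uniformContinuous_of_continuous z.continuous) δ hδ
  set g : ℤ → Euc m := fun k => f (z (projIcc 0 T hT.le (k * η))) with hg
  set h : ℝ → Euc m := fun u => g ⌊u / η⌋ with hh
  have hmeas : Measurable h := (measurable_from_top (f := g)).comp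
    (Int.measurable_floor.comp (measurable_id.div_const η))
  have hint : ∀ a b, IntervalIntegrable h volume a b := fun a b => by
    rw [intervalIntegrable_iff]
    exact Measure.integrableOn_of_bounded (M := B) (by simp [uIoc]) 
      hmeas.aestronglyMeasurable (Eventually.of_forall fun x => hB _ _ (hf _))
  refine ⟨⟨fun τ => z ⟨0, left_mem_Icc.mpr hT.le⟩ + ∫ u in (0:ℝ)..(τ : ℝ), h u, ?_⟩, h, hint _ _, 
    ?_, fun τ => rfl⟩
  · exact continuous_const.add 
      ((intervalIntegral.continuous_primitive hint 0).comp continuous_subtype_val)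
  · intro u
    rw [Fdelta, if_neg hδ.ne']
    refine ⟨_, ?_, (infDist_zero_of_mem (hf _)).trans_lt hδ⟩
    apply huc
    have h1 : (⌊(u:ℝ) / η⌋ : ℝ) * η ≤ u := (le_div_iff₀ hη).1 (Int.floor_le _)
    have h2 : (u:ℝ) < (⌊(u:ℝ) / η⌋ : ℝ) * η + η := by
      have := (div_lt_iff₀ hη).1 (Int.lt_floor_add_one ((u:ℝ) / η))
      linarith
    have h3 : (0:ℝ) ≤ (⌊(u:ℝ) / η⌋ : ℝ) * η :=
      mul_nonneg (by exact_mod_cast Int.floor_nonneg.2 (div_nonneg u.2.1 hη.le)) hη.le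
    rw [projIcc_of_mem hT.le ⟨h3, h1.trans u.2.2⟩, Subtype.dist_eq, Real.dist_eq, abs_sub_comm,
      abs_of_nonneg (sub_nonneg.2 h1)]
    show (u:ℝ) - (⌊(u:ℝ) / η⌋ : ℝ) * η < η
    linarith

/-- (Corollary `distancefix`.) Let `δ_n ↓ 0` with `δ_n > 0` and
`Λ_n := Λ^{δ_n}`. If there is a compact `K ⊆ C([0,T], ℝ^m)` with `Λ_n(z) ⊆ K` for all
`z ∈ K` and `Fix(Λ) = {z ∈ K | z ∈ Λ(z)}` is nonempty, then for every `δ > 0` there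
are `ε > 0` and `n₀` with: for all `n > n₀` and `z ∈ K`,
`d_{[0,T]}(z, Λ_n(z)) ≤ ε ⟹ d_{[0,T]}(z, Fix Λ) ≤ δ`. -/
theorem dist_to_fix_of_dist_to_LambdaDelta
    {m : ℕ} (F : Euc m → Set (Euc m)) (hF : IsStandardSVM F)
    (hFbdd : ∃ B : ℝ, ∀ x, ∀ y ∈ F x, ‖y‖ ≤ B)
    (T : ℝ) (hT : 0 < T)
    (δn : ℕ → ℝ) (hδpos : ∀ n, 0 < δn n) (hδanti : Antitone δn)
    (hδ0 : Tendsto δn atTop (𝓝 0))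
    (K : Set C(Icc (0:ℝ) T, Euc m)) (hK : IsCompact K)
    (hmaps : ∀ n : ℕ, ∀ z ∈ K, LambdaD F T hT.le (δn n) z ⊆ K)
    (hFix : {z : C(Icc (0:ℝ) T, Euc m) | z ∈ K ∧ z ∈ LambdaD F T hT.le 0 z}.Nonempty) :
    ∀ δ > 0, ∃ ε > 0, ∃ n₀ : ℕ, ∀ n > n₀, ∀ z ∈ K,
      Metric.infDist z (LambdaD F T hT.le (δn n) z) ≤ ε →
      Metric.infDist z
        {w : C(Icc (0:ℝ) T, Euc m) | w ∈ K ∧ w ∈ LambdaD F T hT.le 0 w} ≤ δ := by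
  obtain ⟨B, hB⟩ := hFbdd
  intro δ hδ
  by_contra hcon
  push Not at hcon
  choose n hn z hzK hzd hzf using fun k : ℕ => hcon (1 / ((k:ℝ) + 1)) (by positivity) k
  have hex : ∀ k : ℕ, ∃ y ∈ LambdaD F T hT.le (δn (n k)) (z k),
      dist (z k) y < 2 * (1 / ((k:ℝ) + 1)) := fun k => by
    refine (infDist_lt_iff (aux_nonempty hF hB hT (hδpos _) (z k))).1 ((hzd k).trans_lt ?_)
    have : 0 < 1 / ((k:ℝ) + 1) := by positivity
    linarith
  choose y hy hyd using hex
  obtain ⟨w, hwK, φ, hφ, hw⟩ := hK.tendsto_subseq hzK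
  have hnt : Tendsto n atTop atTop := tendsto_atTop_mono (fun k => (hn k).le) tendsto_id
  have hd0 : Tendsto (fun k => dist (z k) (y k)) atTop (𝓝 0) := by
    refine squeeze_zero (fun _ => dist_nonneg) (fun k => (hyd k).le) ?_
    simpa using (tendsto_one_div_add_atTop_nhds_zero_nat (𝕜 := ℝ)).const_mul 2
  have hyw : Tendsto (y ∘ φ) atTop (𝓝 w) :=
    (tendsto_iff_of_dist (hd0.comp hφ.tendsto_atTop)).1 hw
  have hfix : w ∈ LambdaD F T hT.le 0 w :=
    aux_closure hF hB hT (e := fun k => δn (n (φ k))) (fun k => hδpos _)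
      (hδ0.comp (hnt.comp hφ.tendsto_atTop)) hw hyw (fun k => hy (φ k))
  obtain ⟨k, hk⟩ := (Metric.tendsto_nhds.1 hw δ hδ).exists
  have h1 := hzf (φ k)
  have h2 := infDist_le_dist_of_mem (x := z (φ k))
    (s := {w : C(Icc (0:ℝ) T, Euc m) | w ∈ K ∧ w ∈ LambdaD F T hT.le 0 w}) ⟨hwK, hfix⟩
  have h3 : dist (z (φ k)) w < δ := hk
  linarith
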